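/- There exist constants c > 0, μ̂ > 0 and an exponent γ with γ ≥ 2^{1−n} such that for every 0 < μ ≤ μ̂ the central solution (X^μ, y^μ, S^μ) at ε = 0 satisfies dist(X^μ, P*(0)) ≤ c (n μ)^γ and dist(S^μ, {S : (y,S) ∈ D*(0) for some y}) ≤ c (n μ)^γ, where dist denotes the Frobenius-norm distance from a matrix to a set of matrices. -/

import Mathlib

open Matrix Set

noncomputable section

variable {n m : ℕ}

/-- Feasibility for the primal SDO problem `(P_ε)` (the feasible set does not depend on `ε`). -/
def PrimalFeasible (A : Fin m → Matrix (Fin n) (Fin n) ℝ) (b : Fin m → ℝ)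
    (X : Matrix (Fin n) (Fin n) ℝ) : Prop :=
  X.IsSymm ∧ (∀ i, ((A i) * X).trace = b i) ∧ X.PosSemidef

/-- Feasibility for the dual SDO problem `(D_ε)`. -/
def DualFeasible (C Cbar : Matrix (Fin n) (Fin n) ℝ)
    (A : Fin m → Matrix (Fin n) (Fin n) ℝ) (ε : ℝ)
    (y : Fin m → ℝ) (S : Matrix (Fin n) (Fin n) ℝ) : Prop :=
  S.IsSymm ∧ (∑ i, y i • A i) + S = C + ε • Cbar ∧ S.PosSemidef

/-- The optimal value function `v(ε)` of `(P_ε)`, with values in `EReal`. -/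
def vfun (C Cbar : Matrix (Fin n) (Fin n) ℝ) (A : Fin m → Matrix (Fin n) (Fin n) ℝ)
    (b : Fin m → ℝ) (ε : ℝ) : EReal :=
  sInf ((fun X => (((C + ε • Cbar) * X).trace : EReal)) '' {X | PrimalFeasible A b X})

/-- `E = {ε : v(ε) > -∞}`. -/
def Eset (C Cbar : Matrix (Fin n) (Fin n) ℝ) (A : Fin m → Matrix (Fin n) (Fin n) ℝ)
    (b : Fin m → ℝ) : Set ℝ :=
  {ε | ⊥ < vfun C Cbar A b ε}

/-- The primal optimal set `P*(ε)`. -/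
def PrimalOpt (C Cbar : Matrix (Fin n) (Fin n) ℝ) (A : Fin m → Matrix (Fin n) (Fin n) ℝ)
    (b : Fin m → ℝ) (ε : ℝ) : Set (Matrix (Fin n) (Fin n) ℝ) :=
  {X | PrimalFeasible A b X ∧ ∀ X', PrimalFeasible A b X' →
    ((C + ε • Cbar) * X).trace ≤ ((C + ε • Cbar) * X').trace}

/-- The dual optimal set `D*(ε)`. -/
def DualOpt (C Cbar : Matrix (Fin n) (Fin n) ℝ) (A : Fin m → Matrix (Fin n) (Fin n) ℝ)
    (b : Fin m → ℝ) (ε : ℝ) : Set ((Fin m → ℝ) × Matrix (Fin n) (Fin n) ℝ) :=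
  {p | DualFeasible C Cbar A ε p.1 p.2 ∧ ∀ y' S', DualFeasible C Cbar A ε y' S' →
    ∑ i, b i * y' i ≤ ∑ i, b i * p.1 i}

/-- A maximally complementary optimal solution: `X` lies in the relative interior of `P*(ε)`
and `(y, S)` in the relative interior of `D*(ε)`. -/
def MaxComp (C Cbar : Matrix (Fin n) (Fin n) ℝ) (A : Fin m → Matrix (Fin n) (Fin n) ℝ)
    (b : Fin m → ℝ) (ε : ℝ) (X : Matrix (Fin n) (Fin n) ℝ) (y : Fin m → ℝ)
    (S : Matrix (Fin n) (Fin n) ℝ) : Prop :=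
  X ∈ intrinsicInterior ℝ (PrimalOpt C Cbar A b ε) ∧
    (y, S) ∈ intrinsicInterior ℝ (DualOpt C Cbar A b ε)

/-- `π(ε) = π(ε')`: the optimal partitions at `ε` and `ε'` coincide, expressed through
maximally complementary solutions (`B = range X*`, `N = range S*`, `T` being determined
by `B` and `N`). -/
def SamePartition (C Cbar : Matrix (Fin n) (Fin n) ℝ) (A : Fin m → Matrix (Fin n) (Fin n) ℝ)
    (b : Fin m → ℝ) (ε ε' : ℝ) : Prop :=
  ∃ X y S X' y' S', MaxComp C Cbar A b ε X y S ∧ MaxComp C Cbar A b ε' X' y' S' ∧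
    LinearMap.range X.mulVecLin = LinearMap.range X'.mulVecLin ∧
    LinearMap.range S.mulVecLin = LinearMap.range S'.mulVecLin

/-- The standing assumptions: symmetric data, linearly independent constraint matrices and
the interior point condition at `ε = 0`. -/
def StandingAssumptions (C Cbar : Matrix (Fin n) (Fin n) ℝ)
    (A : Fin m → Matrix (Fin n) (Fin n) ℝ) (b : Fin m → ℝ) : Prop :=
  C.IsSymm ∧ Cbar.IsSymm ∧ (∀ i, (A i).IsSymm) ∧ LinearIndependent ℝ A ∧
    ∃ X y S, PrimalFeasible A b X ∧ X.PosDef ∧ DualFeasible C Cbar A 0 y S ∧ S.PosDef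

/-- The invariancy set of `ε̄`. -/
def InvSet (C Cbar : Matrix (Fin n) (Fin n) ℝ) (A : Fin m → Matrix (Fin n) (Fin n) ℝ)
    (b : Fin m → ℝ) (εbar : ℝ) : Set ℝ :=
  {ε | ε ∈ interior (Eset C Cbar A b) ∧ SamePartition C Cbar A b ε εbar}

/-- `dim B(ε) = dim B(ε')` and `dim N(ε) = dim N(ε')`, expressed through maximally
complementary solutions. -/
def DimsMatch (C Cbar : Matrix (Fin n) (Fin n) ℝ) (A : Fin m → Matrix (Fin n) (Fin n) ℝ)
    (b : Fin m → ℝ) (ε ε' : ℝ) : Prop :=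
  ∀ X y S X' y' S', MaxComp C Cbar A b ε X y S → MaxComp C Cbar A b ε' X' y' S' →
    Module.finrank ℝ (LinearMap.range X.mulVecLin) =
        Module.finrank ℝ (LinearMap.range X'.mulVecLin) ∧
      Module.finrank ℝ (LinearMap.range S.mulVecLin) =
        Module.finrank ℝ (LinearMap.range S'.mulVecLin)

/-- A transition point: a singleton invariancy set such that every neighborhood contains a
parameter at which `dim B` or `dim N` differs. -/
def IsTransitionPoint (C Cbar : Matrix (Fin n) (Fin n) ℝ) (A : Fin m → Matrix (Fin n) (Fin n) ℝ)
    (b : Fin m → ℝ) (εbar : ℝ) : Prop :=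
  εbar ∈ interior (Eset C Cbar A b) ∧
    (∀ ε ∈ interior (Eset C Cbar A b), ε ≠ εbar → ¬ SamePartition C Cbar A b ε εbar) ∧
    ∀ ξ : ℝ, 0 < ξ → ∃ ε ∈ Set.Ioo (εbar - ξ) (εbar + ξ) ∩ interior (Eset C Cbar A b),
      ¬ DimsMatch C Cbar A b ε εbar

/-- Existence of a strictly complementary optimal solution at `ε`. -/
def HasStrictComp (C Cbar : Matrix (Fin n) (Fin n) ℝ) (A : Fin m → Matrix (Fin n) (Fin n) ℝ)
    (b : Fin m → ℝ) (ε : ℝ) : Prop :=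
  ∃ X y S, X ∈ PrimalOpt C Cbar A b ε ∧ (y, S) ∈ DualOpt C Cbar A b ε ∧ (X + S).PosDef

/-- Nonsingularity of the Jacobian `J(X, y, S)` of the optimality system, as a linear map on
`S^n × ℝ^m × S^n`: only the trivial symmetric triple is mapped to zero. -/
def JNonsingular (A : Fin m → Matrix (Fin n) (Fin n) ℝ)
    (X S : Matrix (Fin n) (Fin n) ℝ) : Prop :=
  ∀ (DX DS : Matrix (Fin n) (Fin n) ℝ) (Dy : Fin m → ℝ), DX.IsSymm → DS.IsSymm →
    (∀ i, ((A i) * DX).trace = 0) → ((∑ i, Dy i • A i) + DS = 0) →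
    (DX * S + S * DX + X * DS + DS * X = 0) → DX = 0 ∧ Dy = 0 ∧ DS = 0

/-- Primal nondegeneracy of a primal feasible `X`. -/
def PrimalNondeg (A : Fin m → Matrix (Fin n) (Fin n) ℝ)
    (X : Matrix (Fin n) (Fin n) ℝ) : Prop :=
  ∃ (r : ℕ) (M₁ : Matrix (Fin n) (Fin r) ℝ) (M₂ : Matrix (Fin n) (Fin (n - r)) ℝ),
    M₁ᵀ * M₁ = 1 ∧ M₂ᵀ * M₂ = 1 ∧ M₁ᵀ * M₂ = 0 ∧
    LinearMap.range M₁.mulVecLin = LinearMap.range X.mulVecLin ∧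
    LinearIndependent ℝ (fun i =>
      Matrix.fromBlocks (M₁ᵀ * (A i) * M₁) (M₁ᵀ * (A i) * M₂) (M₂ᵀ * (A i) * M₁) 0)

/-- Dual nondegeneracy of a dual feasible `(y, S)` (the condition involves only `S`). -/
def DualNondeg (A : Fin m → Matrix (Fin n) (Fin n) ℝ)
    (S : Matrix (Fin n) (Fin n) ℝ) : Prop :=
  ∃ (k : ℕ) (N₁ : Matrix (Fin n) (Fin k) ℝ),
    N₁ᵀ * N₁ = 1 ∧ LinearMap.range N₁.mulVecLin = LinearMap.ker S.mulVecLin ∧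
    ∀ W : Matrix (Fin k) (Fin k) ℝ, W.IsSymm →
      W ∈ Submodule.span ℝ (Set.range fun i => N₁ᵀ * (A i) * N₁)

/-- A central solution with parameter `μ` for the problems `(P_ε)` and `(D_ε)`. -/
def CentralSol (C Cbar : Matrix (Fin n) (Fin n) ℝ) (A : Fin m → Matrix (Fin n) (Fin n) ℝ)
    (b : Fin m → ℝ) (ε μ : ℝ) (X : Matrix (Fin n) (Fin n) ℝ) (y : Fin m → ℝ)
    (S : Matrix (Fin n) (Fin n) ℝ) : Prop :=
  PrimalFeasible A b X ∧ DualFeasible C Cbar A ε y S ∧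
    X * S = μ • (1 : Matrix (Fin n) (Fin n) ℝ)

/-- The Frobenius norm of a matrix. -/
def frobNorm {α β : Type*} [Fintype α] [Fintype β] (M : Matrix α β ℝ) : ℝ :=
  Real.sqrt (∑ i, ∑ j, (M i j) ^ 2)

/-- The spectral norm (induced 2-norm) of a square matrix. -/
def specNorm {N : ℕ} (M : Matrix (Fin N) (Fin N) ℝ) : ℝ :=
  ‖LinearMap.toContinuousLinearMap (Matrix.toEuclideanLin M)‖

/-- The smallest eigenvalue of a symmetric matrix, via the Rayleigh quotient. -/
def lamMin {k : ℕ} (M : Matrix (Fin k) (Fin k) ℝ) : ℝ :=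
  sInf {r : ℝ | ∃ x : Fin k → ℝ, (∑ i, (x i) ^ 2) = 1 ∧ r = x ⬝ᵥ M.mulVec x}

/-- `θ^μ`: the operator norm of the inverse of the Jacobian `J(X, y, S)` on
`S^n × ℝ^m × S^n`, characterized as the least constant `t ≥ 0` with
`‖(ΔX, Δy, ΔS)‖ ≤ t * ‖J(X,y,S)(ΔX, Δy, ΔS)‖` for all symmetric `ΔX`, `ΔS`. -/
def thetaMu (A : Fin m → Matrix (Fin n) (Fin n) ℝ)
    (X S : Matrix (Fin n) (Fin n) ℝ) : ℝ :=
  sInf {t : ℝ | 0 ≤ t ∧ ∀ (DX DS : Matrix (Fin n) (Fin n) ℝ) (Dy : Fin m → ℝ),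
    DX.IsSymm → DS.IsSymm →
    Real.sqrt (frobNorm DX ^ 2 + (∑ i, (Dy i) ^ 2) + frobNorm DS ^ 2) ≤
      t * Real.sqrt ((∑ i, (((A i) * DX).trace) ^ 2) +
        frobNorm ((∑ i, Dy i • A i) + DS) ^ 2 +
        frobNorm ((1 / 2 : ℝ) • (DX * S + S * DX + X * DS + DS * X)) ^ 2)}

/-- A nonlinearity interval: a non-singleton open subinterval of `int(E)`, of maximal length,
on which `dim B(·)` and `dim N(·)` are constant while the optimal partition `π(·)` varies. -/
def IsNonlinearityInterval (C Cbar : Matrix (Fin n) (Fin n) ℝ)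
    (A : Fin m → Matrix (Fin n) (Fin n) ℝ) (b : Fin m → ℝ) (I : Set ℝ) : Prop :=
  I ⊆ interior (Eset C Cbar A b) ∧ IsOpen I ∧ I.OrdConnected ∧
    (∃ a ∈ I, ∃ c ∈ I, a ≠ c) ∧
    (∀ ε ∈ I, ∀ ε' ∈ I, DimsMatch C Cbar A b ε ε') ∧
    ¬ (∀ ε ∈ I, ∀ ε' ∈ I, SamePartition C Cbar A b ε ε') ∧
    ∀ I' : Set ℝ, I ⊆ I' → I' ⊆ interior (Eset C Cbar A b) → IsOpen I' → I'.OrdConnected →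
      (∀ ε ∈ I', ∀ ε' ∈ I', DimsMatch C Cbar A b ε ε') → I' = I

end

/-!
Both optimal sets are spectrahedra `{X ⪰ 0 : L X = w}`: tracing against a strictly feasible
solution of the other problem turns the objective into a coercive linear functional, and the
optimal set is cut out of the feasible set by prescribing its value. The central solution satisfies
all these constraints except that the functional is off by at most the duality gap `n μ`.

It remains to bound the distance to a spectrahedron by a power of the residual, which is Sturm's
facial reduction argument. If the spectrahedron contains a positive definite matrix, the bound is
linear. Otherwise a separating hyperplane yields `S ⪰ 0`, `S ≠ 0`, such that `tr (S X)` is at most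
a multiple of the residual for all `X ⪰ 0`. Then `X` lies within the square root of the residual of
the face of matrices whose range is contained in `ker S`, and the same question on that face
concerns matrices of smaller size. Each of the at most `n - 1` reductions to a nonzero face halves
the exponent.
-/

section HolderBound
open scoped Matrix.Norms.Frobenius MatrixOrder

section PosSemidef

variable {ι κ ν : Type*} [Fintype ι] [Fintype κ] [Fintype ν]

theorem norm_sq_eq_trace_conjTranspose_mul_self (B : Matrix κ ι ℝ) :
    ‖B‖ ^ 2 = (Bᴴ * B).trace := by
  rw [frobenius_norm_def, ← Real.sqrt_eq_rpow, Real.sq_sqrt (by positivity), Finset.sum_comm]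
  simp [trace, mul_apply, sq]

theorem abs_trace_mul_le_norm_mul_norm (A : Matrix ι κ ℝ) (B : Matrix κ ι ℝ) :
    |(A * B).trace| ≤ ‖A‖ * ‖B‖ := by
  have h_sq (M : Matrix ι κ ℝ) : ‖M‖ ^ 2 = ∑ p : ι × κ, M p.1 p.2 ^ 2 := by
    rw [frobenius_norm_def, ← Real.sqrt_eq_rpow, Real.sq_sqrt (by positivity),
      Fintype.sum_prod_type]
    simp
  have h_trace : (A * B).trace = ∑ p : ι × κ, A p.1 p.2 * Bᴴ p.1 p.2 := by
    simp [trace, mul_apply, Fintype.sum_prod_type]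
  rw [← frobenius_norm_conjTranspose B]
  refine abs_le_of_sq_le_sq ?_ (by positivity)
  rw [mul_pow, h_sq, h_sq, h_trace]
  exact Finset.sum_mul_sq_le_sq_mul_sq _ _ _

theorem exists_eq_conjTranspose_mul_self {X : Matrix ι ι ℝ} (hX : X.PosSemidef) :
    ∃ B : Matrix ι ι ℝ, X = Bᴴ * B := by
  classical
  exact CStarAlgebra.nonneg_iff_eq_star_mul_self.mp hX.nonneg

theorem trace_conjTranspose_mul_self_mul_conjTranspose_mul_self (B : Matrix κ ι ℝ)
    (H : Matrix ν ι ℝ) : (Bᴴ * B * (Hᴴ * H)).trace = ‖H * Bᴴ‖ ^ 2 := by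
  rw [norm_sq_eq_trace_conjTranspose_mul_self, conjTranspose_mul, conjTranspose_conjTranspose,
    Matrix.mul_assoc, trace_mul_comm]
  simp only [Matrix.mul_assoc]

theorem trace_mul_nonneg {S X : Matrix ι ι ℝ} (hS : S.PosSemidef) (hX : X.PosSemidef) :
    0 ≤ (S * X).trace := by
  obtain ⟨B, rfl⟩ := exists_eq_conjTranspose_mul_self hS
  obtain ⟨H, rfl⟩ := exists_eq_conjTranspose_mul_self hX
  rw [trace_conjTranspose_mul_self_mul_conjTranspose_mul_self]
  positivity

theorem norm_le_trace {X : Matrix ι ι ℝ} (hX : X.PosSemidef) : ‖X‖ ≤ X.trace := by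
  obtain ⟨B, rfl⟩ := exists_eq_conjTranspose_mul_self hX
  calc ‖Bᴴ * B‖ ≤ ‖Bᴴ‖ * ‖B‖ := frobenius_norm_mul _ _
    _ = (Bᴴ * B).trace := by
      rw [frobenius_norm_conjTranspose, ← sq, norm_sq_eq_trace_conjTranspose_mul_self]

theorem norm_mul_sq_le_trace {S X : Matrix ι ι ℝ} (hS : S.PosSemidef) (hX : X.PosSemidef) :
    ‖S * X‖ ^ 2 ≤ S.trace * X.trace * (S * X).trace := by
  obtain ⟨B, rfl⟩ := exists_eq_conjTranspose_mul_self hS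
  obtain ⟨H, rfl⟩ := exists_eq_conjTranspose_mul_self hX
  have h_norm : ‖Bᴴ * B * (Hᴴ * H)‖ ≤ ‖B‖ * ‖H * Bᴴ‖ * ‖H‖ :=
    calc ‖Bᴴ * B * (Hᴴ * H)‖ = ‖Bᴴ * (H * Bᴴ)ᴴ * H‖ := by
          simp only [conjTranspose_mul, conjTranspose_conjTranspose, Matrix.mul_assoc]
      _ ≤ ‖Bᴴ‖ * ‖(H * Bᴴ)ᴴ‖ * ‖H‖ := (frobenius_norm_mul _ _).trans <| by
          gcongr; exact frobenius_norm_mul _ _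
      _ = ‖B‖ * ‖H * Bᴴ‖ * ‖H‖ := by simp only [frobenius_norm_conjTranspose]
  calc ‖Bᴴ * B * (Hᴴ * H)‖ ^ 2 ≤ (‖B‖ * ‖H * Bᴴ‖ * ‖H‖) ^ 2 := by gcongr
    _ = ‖B‖ ^ 2 * ‖H‖ ^ 2 * ‖H * Bᴴ‖ ^ 2 := by ring
    _ = _ := by
      rw [trace_conjTranspose_mul_self_mul_conjTranspose_mul_self,
        norm_sq_eq_trace_conjTranspose_mul_self B, norm_sq_eq_trace_conjTranspose_mul_self H]

variable [DecidableEq ι]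

theorem norm_smul_one_add_posSemidef {Z : Matrix ι ι ℝ} (hZ : Z.IsHermitian) :
    (‖Z‖ • (1 : Matrix ι ι ℝ) + Z).PosSemidef := by
  refine .of_dotProduct_mulVec_nonneg ((isHermitian_one.smul (.all _)).add hZ) fun x ↦ ?_
  have h_norm : ‖vecMulVec x (star x)‖ ≤ star x ⬝ᵥ x := by
    simpa [trace_vecMulVec, dotProduct_comm] using
      norm_le_trace (posSemidef_vecMulVec_self_star x)
  have h_quad : star x ⬝ᵥ Z *ᵥ x = (Z * vecMulVec x (star x)).trace := by
    rw [mul_vecMulVec, trace_vecMulVec, dotProduct_comm]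
  have h_lower : -(‖Z‖ * (star x ⬝ᵥ x)) ≤ star x ⬝ᵥ Z *ᵥ x := by
    rw [h_quad]
    refine neg_le_of_abs_le ((abs_trace_mul_le_norm_mul_norm _ _).trans ?_)
    gcongr
  rw [add_mulVec, dotProduct_add, smul_mulVec, dotProduct_smul, one_mulVec, smul_eq_mul]
  linarith

theorem exists_pos_sub_smul_one_posSemidef {ι : Type*} [Finite ι] [DecidableEq ι]
    {M : Matrix ι ι ℝ} (hM : M.PosDef) :
    ∃ l : ℝ, 0 < l ∧ (M - l • (1 : Matrix ι ι ℝ)).PosSemidef := by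
  have := Fintype.ofFinite ι
  cases isEmpty_or_nonempty ι with
  | inl _ => exact ⟨1, one_pos, by rw [Subsingleton.elim (M - _) 0]; exact .zero⟩
  | inr _ =>
    obtain ⟨l, hl, h⟩ := (CFC.exists_pos_algebraMap_le_iff (a := M) hM.isHermitian).2
      fun x hx ↦ hM.isStrictlyPositive.spectrum_pos hx
    exact ⟨l, hl, by simpa [Matrix.le_iff, Algebra.algebraMap_eq_smul_one] using h⟩

theorem posDef_of_sub_smul_one_posSemidef {ι : Type*} [Finite ι] [DecidableEq ι]
    {M : Matrix ι ι ℝ} {l : ℝ} (hl : 0 < l)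
    (hM : (M - l • (1 : Matrix ι ι ℝ)).PosSemidef) : M.PosDef := by
  have := Fintype.ofFinite ι
  simpa using (PosDef.one.smul hl).add_posSemidef hM

theorem exists_norm_le_mul_trace {ι : Type*} [Fintype ι] {D : Matrix ι ι ℝ} (hD : D.PosDef) :
    ∃ c : ℝ, 0 ≤ c ∧ ∀ X : Matrix ι ι ℝ, X.PosSemidef → ‖X‖ ≤ c * (D * X).trace := by
  classical
  obtain ⟨l, hl, hDl⟩ := exists_pos_sub_smul_one_posSemidef hD
  refine ⟨l⁻¹, by positivity, fun X hX ↦ (norm_le_trace hX).trans ?_⟩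
  have h_trace := trace_mul_nonneg hDl hX
  rw [Matrix.sub_mul, trace_sub, smul_mul_assoc, Matrix.one_mul, trace_smul, smul_eq_mul,
    sub_nonneg] at h_trace
  rwa [inv_mul_eq_div, le_div_iff₀' hl]

end PosSemidef

section Separation

theorem exists_forall_neg_and_forall_eq_zero {E : Type*} [AddCommGroup E] [Module ℝ E]
    [TopologicalSpace E] [IsTopologicalAddGroup E] [ContinuousSMul ℝ E] {K : Set E}
    (hK : Convex ℝ K) (hK_open : IsOpen K) (V : Submodule ℝ E) (hKV : Disjoint K V) :
    ∃ f : E →L[ℝ] ℝ, (∀ x ∈ K, f x < 0) ∧ ∀ v ∈ V, f v = 0 := by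
  obtain ⟨f, u, hfK, hfV⟩ := geometric_hahn_banach_open hK hK_open V.convex hKV
  have hu : u ≤ 0 := by simpa using hfV 0 V.zero_mem
  refine ⟨f, fun x hx ↦ (hfK x hx).trans_le hu, fun v hv ↦ ?_⟩
  by_contra hne
  have h := hfV _ (V.smul_mem ((u - 1) / f v) hv)
  rw [map_smul, smul_eq_mul, div_mul_cancel₀ _ hne] at h
  linarith

variable {ι : Type*}

/-- The symmetric part `(M + Mᵀ) / 2` of a square matrix `M`, as a linear map. It lets
functionals and linear systems on symmetric matrices be treated on the space of all matrices. -/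
noncomputable def symmetricPart : Matrix ι ι ℝ →ₗ[ℝ] Matrix ι ι ℝ :=
  (2⁻¹ : ℝ) • (LinearMap.id + (conjTransposeLinearEquiv ι ι ℝ ℝ).toLinearMap)

theorem symmetricPart_apply (M : Matrix ι ι ℝ) : symmetricPart M = (2⁻¹ : ℝ) • (M + Mᴴ) := rfl

theorem isHermitian_symmetricPart (M : Matrix ι ι ℝ) : (symmetricPart M).IsHermitian := by
  rw [symmetricPart_apply]
  exact (isHermitian_add_transpose_self M).smul (.all _)

theorem symmetricPart_eq_self {M : Matrix ι ι ℝ} (hM : M.IsHermitian) : symmetricPart M = M := by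
  rw [symmetricPart_apply, hM.eq, ← two_smul ℝ M, smul_smul, inv_mul_cancel₀ two_ne_zero, one_smul]

theorem symmetricPart_sub_conjTranspose (M : Matrix ι ι ℝ) : symmetricPart (M - Mᴴ) = 0 := by
  simp [symmetricPart_apply]

theorem convex_setOf_posDef_symmetricPart :
    Convex ℝ {M : Matrix ι ι ℝ | (symmetricPart M).PosDef} := by
  refine Convex.linear_preimage (s := {M : Matrix ι ι ℝ | M.PosDef}) ?_ symmetricPart
  refine convex_iff_forall_pos.2 fun M hM N hN a b ha hb _ ↦ ?_
  exact (hM.smul ha).add (hN.smul hb)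

variable [Fintype ι]

theorem norm_symmetricPart_le (M : Matrix ι ι ℝ) : ‖symmetricPart M‖ ≤ ‖M‖ := by
  rw [symmetricPart_apply, norm_smul, Real.norm_of_nonneg (by positivity), inv_mul_le_iff₀ two_pos]
  calc ‖M + Mᴴ‖ ≤ ‖M‖ + ‖Mᴴ‖ := norm_add_le _ _
    _ = 2 * ‖M‖ := by rw [frobenius_norm_conjTranspose, two_mul]

theorem isOpen_setOf_posDef_symmetricPart {ι : Type*} [Finite ι] :
    IsOpen {M : Matrix ι ι ℝ | (symmetricPart M).PosDef} := by
  classical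
  have := Fintype.ofFinite ι
  refine Metric.isOpen_iff.2 fun M (hM : (symmetricPart M).PosDef) ↦ ?_
  obtain ⟨l, hl, hMl⟩ := exists_pos_sub_smul_one_posSemidef hM
  refine ⟨l, hl, fun N hN ↦ ?_⟩
  have h_norm : ‖symmetricPart (N - M)‖ < l :=
    (norm_symmetricPart_le _).trans_lt (by rwa [← dist_eq_norm])
  have h_perturb := norm_smul_one_add_posSemidef (isHermitian_symmetricPart (N - M))
  refine posDef_of_sub_smul_one_posSemidef (sub_pos.2 h_norm) ?_
  convert hMl.add h_perturb using 1
  rw [map_sub]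
  module

/-- The linear functional `M ↦ tr (S M)`, which is the Frobenius inner product with `S` when `S`
is symmetric. -/
def traceMul (S : Matrix ι ι ℝ) : Matrix ι ι ℝ →ₗ[ℝ] ℝ :=
  traceLinearMap ι ℝ ℝ ∘ₗ LinearMap.mulLeft ℝ S

theorem traceMul_apply (S M : Matrix ι ι ℝ) : traceMul S M = (S * M).trace := rfl

theorem exists_eq_traceMul (f : Matrix ι ι ℝ →ₗ[ℝ] ℝ) : ∃ S : Matrix ι ι ℝ, f = traceMul S := by
  classical
  refine ⟨of fun i j ↦ f (single j i 1), Matrix.ext_linearMap ℝ fun i j ↦ LinearMap.ext_ring ?_⟩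
  simp [traceMul_apply, trace_mul_single]

theorem posSemidef_of_forall_trace_mul_nonneg {S : Matrix ι ι ℝ} (hS : S.IsHermitian)
    (h : ∀ X : Matrix ι ι ℝ, X.PosDef → 0 ≤ (S * X).trace) : S.PosSemidef := by
  classical
  refine .of_dotProduct_mulVec_nonneg hS fun x ↦ ?_
  have h_quad : (S * vecMulVec x (star x)).trace = star x ⬝ᵥ S *ᵥ x := by
    rw [mul_vecMulVec, trace_vecMulVec, dotProduct_comm]
  have h_cont : Continuous fun t : ℝ ↦
      (S * (t • (1 : Matrix ι ι ℝ) + vecMulVec x (star x))).trace := by fun_prop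
  have h_lim := (h_cont.tendsto 0).mono_left (nhdsWithin_le_nhds (s := Ioi 0))
  rw [zero_smul, zero_add, h_quad] at h_lim
  refine ge_of_tendsto h_lim (eventually_nhdsWithin_of_forall fun t (ht : 0 < t) ↦ h _ ?_)
  exact (PosDef.one.smul ht).add_posSemidef (posSemidef_vecMulVec_self_star x)

theorem isHermitian_of_forall_trace_mul_eq {S : Matrix ι ι ℝ}
    (h : ∀ M : Matrix ι ι ℝ, (S * Mᴴ).trace = (S * M).trace) : S.IsHermitian := by
  classical
  ext i j
  simpa [trace_mul_single, conjTranspose_single] using h (single j i 1)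

theorem exists_posSemidef_forall_trace_mul_eq_zero (V : Submodule ℝ (Matrix ι ι ℝ))
    (hV : ∀ M ∈ V, ¬ M.PosDef) :
    ∃ S : Matrix ι ι ℝ, S.PosSemidef ∧ S ≠ 0 ∧
      ∀ M ∈ V, M.IsHermitian → (S * M).trace = 0 := by
  classical
  obtain ⟨f, hf_neg, hf_zero⟩ := exists_forall_neg_and_forall_eq_zero
    convex_setOf_posDef_symmetricPart isOpen_setOf_posDef_symmetricPart (V.comap symmetricPart)
    (disjoint_left.2 fun M hM hMV ↦ hV _ hMV hM)
  have hf_posDef (M : Matrix ι ι ℝ) (hM : M.PosDef) : f M < 0 :=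
    hf_neg M (by rwa [mem_ofPred_eq, symmetricPart_eq_self hM.isHermitian])
  obtain ⟨S, h_eq⟩ := exists_eq_traceMul (-f).toLinearMap
  have hS (M) : (S * M).trace = -f M := LinearMap.congr_fun h_eq.symm M
  have hS_herm : S.IsHermitian := isHermitian_of_forall_trace_mul_eq fun M ↦ by
    have h_skew : f M - f Mᴴ = 0 := by
      rw [← map_sub]
      refine hf_zero _ ?_
      rw [Submodule.mem_comap, symmetricPart_sub_conjTranspose]
      exact V.zero_mem
    rw [hS, hS, sub_eq_zero.1 h_skew]
  have hS_psd : S.PosSemidef := posSemidef_of_forall_trace_mul_nonneg hS_herm fun X hX ↦ by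
    rw [hS, neg_nonneg]
    exact (hf_posDef X hX).le
  refine ⟨S, hS_psd, ?_, fun M hM hM_herm ↦ ?_⟩
  · rintro rfl
    have h_one := hf_posDef 1 .one
    rw [← neg_pos, ← hS, Matrix.zero_mul, trace_zero] at h_one
    exact h_one.false
  · rw [hS, hf_zero M (by rwa [Submodule.mem_comap, symmetricPart_eq_self hM_herm]), neg_zero]

end Separation

section LinearSystem

theorem exists_forall_preimage_norm_le {E W : Type*} [NormedAddCommGroup E] [NormedSpace ℝ E]
    [FiniteDimensional ℝ E] [NormedAddCommGroup W] [NormedSpace ℝ W] (L : E →ₗ[ℝ] W) :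
    ∃ c : ℝ, 0 ≤ c ∧ ∀ x : E, ∃ z : E, L z = L x ∧ ‖z‖ ≤ c * ‖L x‖ := by
  have := FiniteDimensional.complete ℝ E
  have := FiniteDimensional.complete ℝ (LinearMap.range L)
  obtain ⟨c, hc, h⟩ := L.rangeRestrict.toContinuousLinearMap.exists_preimage_norm_le
    L.surjective_rangeRestrict
  refine ⟨c, hc.le, fun x ↦ ?_⟩
  obtain ⟨z, hz, hz_norm⟩ := h ⟨L x, x, rfl⟩
  exact ⟨z, congrArg Subtype.val hz, hz_norm⟩

theorem exists_forall_norm_map_le {E W : Type*} [NormedAddCommGroup E] [NormedSpace ℝ E]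
    [FiniteDimensional ℝ E] [NormedAddCommGroup W] [NormedSpace ℝ W] (L : E →ₗ[ℝ] W) :
    ∃ c : ℝ, 0 ≤ c ∧ ∀ x : E, ‖L x‖ ≤ c * ‖x‖ :=
  ⟨‖L.toContinuousLinearMap‖, norm_nonneg _, L.toContinuousLinearMap.le_opNorm⟩

variable {ι W : Type*} [Fintype ι] [NormedAddCommGroup W] [NormedSpace ℝ W]

theorem exists_forall_isHermitian_preimage_norm_le (L : Matrix ι ι ℝ →ₗ[ℝ] W) :
    ∃ c : ℝ, 0 ≤ c ∧ ∀ M : Matrix ι ι ℝ, M.IsHermitian →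
      ∃ Z : Matrix ι ι ℝ, Z.IsHermitian ∧ L Z = L M ∧ ‖Z‖ ≤ c * ‖L M‖ := by
  obtain ⟨c, hc, h⟩ := exists_forall_preimage_norm_le (L ∘ₗ symmetricPart)
  refine ⟨c, hc, fun M hM ↦ ?_⟩
  obtain ⟨Z, hLZ, hZ_norm⟩ := h M
  simp only [LinearMap.comp_apply, symmetricPart_eq_self hM] at hLZ hZ_norm
  exact ⟨symmetricPart Z, isHermitian_symmetricPart Z, hLZ, (norm_symmetricPart_le Z).trans hZ_norm⟩

theorem exists_trace_mul_le_mul_norm_sub {L : Matrix ι ι ℝ →ₗ[ℝ] W} {S X₀ : Matrix ι ι ℝ}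
    (hX₀ : X₀.IsHermitian) (hSX₀ : (S * X₀).trace = 0)
    (hS : ∀ M : Matrix ι ι ℝ, M.IsHermitian → L M = 0 → (S * M).trace = 0) :
    ∃ c : ℝ, 0 ≤ c ∧ ∀ X : Matrix ι ι ℝ, X.IsHermitian →
      (S * X).trace ≤ c * ‖L X - L X₀‖ := by
  obtain ⟨c, hc, h⟩ := exists_forall_isHermitian_preimage_norm_le L
  refine ⟨‖S‖ * c, by positivity, fun X hX ↦ ?_⟩
  obtain ⟨Z, hZ, hLZ, hZ_norm⟩ := h (X - X₀) (hX.sub hX₀)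
  have h_trace : (S * X).trace = (S * Z).trace := by
    have h_ker := hS (X - X₀ - Z) ((hX.sub hX₀).sub hZ) (by rw [map_sub, hLZ, sub_self])
    rw [Matrix.mul_sub, Matrix.mul_sub, trace_sub, trace_sub, hSX₀] at h_ker
    linarith
  calc (S * X).trace ≤ ‖S‖ * ‖Z‖ :=
        h_trace ▸ (le_abs_self _).trans (abs_trace_mul_le_norm_mul_norm S Z)
    _ ≤ ‖S‖ * (c * ‖L X - L X₀‖) := by rw [← map_sub]; gcongr
    _ = ‖S‖ * c * ‖L X - L X₀‖ := by ring

end LinearSystem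

section ErrorBound

variable {ι κ W : Type*} [NormedAddCommGroup W] [NormedSpace ℝ W]

/-- The spectrahedron `{X ⪰ 0 : L X = w}`, the feasible set of a semidefinite program whose
linear constraints are encoded by a single linear map `L`. -/
def spectrahedron (L : Matrix ι ι ℝ →ₗ[ℝ] W) (w : W) : Set (Matrix ι ι ℝ) :=
  {X | X.PosSemidef ∧ L X = w}

theorem exists_posSemidef_trace_mul_le [Fintype ι] {L : Matrix ι ι ℝ →ₗ[ℝ] W} {w : W}
    (h_ne : (spectrahedron L w).Nonempty) (h_slater : ∀ X ∈ spectrahedron L w, ¬ X.PosDef) :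
    ∃ S : Matrix ι ι ℝ, S.PosSemidef ∧ S ≠ 0 ∧
      ∃ c : ℝ, 0 ≤ c ∧ ∀ X : Matrix ι ι ℝ, X.PosSemidef → (S * X).trace ≤ c * ‖L X - w‖ := by
  obtain ⟨X₀, hX₀, rfl⟩ := h_ne
  have hV : ∀ M ∈ LinearMap.ker L ⊔ ℝ ∙ X₀, ¬ M.PosDef := by
    intro M hM hM_pos
    obtain ⟨v, hv, _, ha, rfl⟩ := Submodule.mem_sup.1 hM
    obtain ⟨a, rfl⟩ := Submodule.mem_span_singleton.1 ha
    replace hv : L v = 0 := hv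
    rcases lt_or_ge 0 a with ha | ha
    · refine h_slater (a⁻¹ • (v + a • X₀)) ⟨(hM_pos.smul (inv_pos.2 ha)).posSemidef, ?_⟩
        (hM_pos.smul (inv_pos.2 ha))
      rw [map_smul, map_add, hv, zero_add, map_smul, inv_smul_smul₀ ha.ne']
    · have h_pos : (v + a • X₀ + (1 - a) • X₀).PosDef :=
        hM_pos.add_posSemidef (hX₀.smul (by linarith))
      rw [add_assoc, ← add_smul, add_sub_cancel, one_smul] at h_pos
      exact h_slater (v + X₀) ⟨h_pos.posSemidef, by rw [map_add, hv, zero_add]⟩ h_pos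
  obtain ⟨S, hS, hS_ne, hSV⟩ := exists_posSemidef_forall_trace_mul_eq_zero _ hV
  obtain ⟨c, hc, h⟩ := exists_trace_mul_le_mul_norm_sub (L := L) hX₀.isHermitian
    (hSV X₀ (Submodule.mem_sup_right (Submodule.mem_span_singleton_self X₀)) hX₀.isHermitian)
    fun M hM hLM ↦ hSV M (Submodule.mem_sup_left hLM) hM
  exact ⟨S, hS, hS_ne, c, hc, fun X hX ↦ h X hX.isHermitian⟩

theorem submatrix_subtype_mul_conjTranspose [Fintype ι] [DecidableEq ι] (V : Matrix κ ι ℝ)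
    (p : ι → Prop) [DecidablePred p] :
    V.submatrix id (Subtype.val : {i // p i} → ι) *
        (V.submatrix id (Subtype.val : {i // p i} → ι))ᴴ =
      V * diagonal (fun i ↦ if p i then (1 : ℝ) else 0) * Vᴴ := by
  ext i j
  rw [mul_apply, mul_apply]
  simp only [mul_diagonal, conjTranspose_apply, submatrix_apply, id, mul_ite, mul_one, mul_zero,
    ite_mul, zero_mul]
  rw [← Finset.sum_filter, Finset.sum_subtype (p := p) _ (by simp)]

theorem exists_one_sub_mul_conjTranspose_eq_mul [Fintype ι] [DecidableEq ι] {S : Matrix ι ι ℝ}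
    (hS : S.IsHermitian) :
    ∃ (U : Matrix ι {i // hS.eigenvalues i = 0} ℝ) (G : Matrix ι ι ℝ), 1 - U * Uᴴ = G * S := by
  set φ := Unitary.conjStarAlgAut ℝ (Matrix ι ι ℝ) hS.eigenvectorUnitary
  let V : Matrix ι ι ℝ := hS.eigenvectorUnitary
  have hS_eq : S = φ (diagonal hS.eigenvalues) := hS.spectral_theorem
  -- The columns of `U` are the eigenvectors with eigenvalue `0`; since `0⁻¹ = 0`, this choice of
  -- `G` is the pseudoinverse of `S`.
  refine ⟨V.submatrix id Subtype.val, φ (diagonal hS.eigenvalues⁻¹), ?_⟩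
  have h_compl : 1 - φ (diagonal fun i ↦ if hS.eigenvalues i = 0 then 1 else 0) =
      φ (diagonal hS.eigenvalues⁻¹) * φ (diagonal hS.eigenvalues) := by
    rw [← map_one φ, ← map_sub, ← map_mul, diagonal_mul_diagonal, ← diagonal_one, diagonal_sub]
    congr 2
    ext i
    by_cases hi : hS.eigenvalues i = 0 <;> simp [hi]
  rw [← hS_eq] at h_compl
  rwa [submatrix_subtype_mul_conjTranspose]

/-- The system `X ⪰ 0, L X = w` satisfies a local Hölderian error bound with exponent `γ`: on every
ball, the distance of a positive semidefinite matrix to the spectrahedron is bounded by a multiple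
of the `γ`-th power of its residual. -/
def HasHolderErrorBound [Fintype ι] (L : Matrix ι ι ℝ →ₗ[ℝ] W) (w : W) (γ : ℝ) : Prop :=
  ∀ R : ℝ, ∃ c : ℝ, 0 ≤ c ∧ ∀ X : Matrix ι ι ℝ, X.PosSemidef → ‖X‖ ≤ R →
    ∃ Y ∈ spectrahedron L w, ‖X - Y‖ ≤ c * ‖L X - w‖ ^ γ

theorem rpow_le_rpow_sub_mul_rpow {x B p q : ℝ} (hx : 0 ≤ x) (hxB : x ≤ B) (hp : 0 ≤ p)
    (hpq : p ≤ q) : x ^ q ≤ B ^ (q - p) * x ^ p := by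
  calc x ^ q = x ^ (q - p) * x ^ p := by
        rw [← Real.rpow_add_of_nonneg hx (sub_nonneg.2 hpq) hp, sub_add_cancel]
    _ ≤ B ^ (q - p) * x ^ p := by
        gcongr

theorem exists_forall_norm_map_sub_le [Fintype ι] (L : Matrix ι ι ℝ →ₗ[ℝ] W) (w : W) (R : ℝ) :
    ∃ B : ℝ, ∀ X : Matrix ι ι ℝ, ‖X‖ ≤ R → ‖L X - w‖ ≤ B := by
  obtain ⟨K, hK, hLK⟩ := exists_forall_norm_map_le L
  refine ⟨K * R + ‖w‖, fun X hX ↦ (norm_sub_le _ _).trans ?_⟩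
  gcongr
  exact (hLK X).trans (by gcongr)

variable [Fintype κ]

/-- The congruence `M ↦ U M Uᵀ`. When the columns of `U` span the kernel of a positive
semidefinite `S`, its image of the positive semidefinite cone is the face exposed by `S`. -/
def congruence (U : Matrix ι κ ℝ) : Matrix κ κ ℝ →ₗ[ℝ] Matrix ι ι ℝ :=
  mulRightLinearMap ι ℝ Uᴴ ∘ₗ mulLeftLinearMap κ ℝ U

theorem congruence_apply (U : Matrix ι κ ℝ) (M : Matrix κ κ ℝ) :
    congruence U M = U * M * Uᴴ := rfl

theorem posSemidef_congruence [Finite ι] {M : Matrix κ κ ℝ} (hM : M.PosSemidef)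
    (U : Matrix ι κ ℝ) : (congruence U M).PosSemidef :=
  hM.mul_mul_conjTranspose_same U

variable [Fintype ι] {L : Matrix ι ι ℝ →ₗ[ℝ] W} {w : W} {γ : ℝ}

theorem HasHolderErrorBound.mono {γ' : ℝ} (h : HasHolderErrorBound L w γ) (hγ' : 0 ≤ γ')
    (hγ : γ' ≤ γ) : HasHolderErrorBound L w γ' := by
  intro R
  obtain ⟨c, hc, h⟩ := h R
  obtain ⟨B, hB⟩ := exists_forall_norm_map_sub_le L w R
  refine ⟨c * |B| ^ (γ - γ'), by positivity, fun X hX hXR ↦ ?_⟩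
  obtain ⟨Y, hY, hXY⟩ := h X hX hXR
  refine ⟨Y, hY, hXY.trans ?_⟩
  rw [mul_assoc]
  gcongr
  exact rpow_le_rpow_sub_mul_rpow (norm_nonneg _) ((hB X hXR).trans (le_abs_self B)) hγ' hγ

theorem norm_sub_inv_smul_add_add_smul_le {E : Type*} [NormedAddCommGroup E] [NormedSpace ℝ E]
    (X Z M : E) {s : ℝ} (hs : 0 ≤ s) :
    ‖X - (1 + s)⁻¹ • (X + Z + s • M)‖ ≤ s * ‖X - M‖ + ‖Z‖ := by
  have h_diff : X - (1 + s)⁻¹ • (X + Z + s • M) = (1 + s)⁻¹ • (s • (X - M) - Z) := by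
    rw [eq_inv_smul_iff₀ (by positivity), smul_sub, smul_inv_smul₀ (by positivity)]
    module
  calc ‖X - (1 + s)⁻¹ • (X + Z + s • M)‖ = (1 + s)⁻¹ * ‖s • (X - M) - Z‖ := by
        rw [h_diff, norm_smul, Real.norm_of_nonneg (by positivity)]
    _ ≤ ‖s • (X - M) - Z‖ :=
        mul_le_of_le_one_left (norm_nonneg _) (inv_le_one_of_one_le₀ (by linarith))
    _ ≤ s * ‖X - M‖ + ‖Z‖ := by
        refine (norm_sub_le _ _).trans_eq ?_
        rw [norm_smul, Real.norm_of_nonneg hs]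

theorem hasHolderErrorBound_one_of_posDef {M : Matrix ι ι ℝ} (hM : M ∈ spectrahedron L w)
    (hM_pos : M.PosDef) : HasHolderErrorBound L w 1 := by
  classical
  intro R
  obtain ⟨l, hl, hMl⟩ := exists_pos_sub_smul_one_posSemidef hM_pos
  obtain ⟨c, hc, h_hoffman⟩ := exists_forall_isHermitian_preimage_norm_le L
  refine ⟨c * ((|R| + ‖M‖) / l + 1), by positivity, fun X hX hXR ↦ ?_⟩
  obtain ⟨Z, hZ, hLZ, hZ_norm⟩ := h_hoffman (M - X) (hM_pos.isHermitian.sub hX.isHermitian)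
  rw [map_sub, hM.2] at hLZ hZ_norm
  obtain ⟨s, hs_def⟩ : ∃ s, s = ‖Z‖ / l := ⟨_, rfl⟩
  have hs : 0 ≤ s := hs_def ▸ by positivity
  have hsl : s * l = ‖Z‖ := by rw [hs_def, div_mul_cancel₀ _ hl.ne']
  have h_psd : (X + Z + s • M).PosSemidef := by
    convert (hX.add (norm_smul_one_add_posSemidef hZ)).add (hMl.smul hs) using 1
    rw [smul_sub, smul_smul, hsl]
    module
  -- `X + Z` solves the linear system; a convex combination with `M` restores positivity.
  refine ⟨(1 + s)⁻¹ • (X + Z + s • M), ⟨h_psd.smul (by positivity), ?_⟩, ?_⟩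
  · rw [map_smul, map_add, map_add, map_smul, hLZ, hM.2, inv_smul_eq_iff₀ (by positivity)]
    module
  · calc ‖X - (1 + s)⁻¹ • (X + Z + s • M)‖ ≤ s * ‖X - M‖ + ‖Z‖ :=
          norm_sub_inv_smul_add_add_smul_le X Z M hs
      _ ≤ s * (|R| + ‖M‖) + ‖Z‖ := by
          gcongr
          exact (norm_sub_le _ _).trans (by gcongr; exact hXR.trans (le_abs_self R))
      _ = ‖Z‖ * ((|R| + ‖M‖) / l + 1) := by rw [hs_def]; ring
      _ ≤ c * ‖w - L X‖ * ((|R| + ‖M‖) / l + 1) := by gcongr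
      _ = c * ((|R| + ‖M‖) / l + 1) * ‖L X - w‖ ^ (1 : ℝ) := by
          rw [Real.rpow_one, norm_sub_rev w]; ring

theorem hasHolderErrorBound_one_of_trace_mul_le {S : Matrix ι ι ℝ} (hS : S.PosDef)
    (h_ne : (spectrahedron L w).Nonempty) {c : ℝ} (hc : 0 ≤ c)
    (h : ∀ X : Matrix ι ι ℝ, X.PosSemidef → (S * X).trace ≤ c * ‖L X - w‖) :
    HasHolderErrorBound L w 1 := by
  obtain ⟨c', hc', h_coercive⟩ := exists_norm_le_mul_trace hS
  have h_norm {X : Matrix ι ι ℝ} (hX : X.PosSemidef) : ‖X‖ ≤ c' * c * ‖L X - w‖ := by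
    rw [mul_assoc]
    exact (h_coercive X hX).trans (by gcongr; exact h X hX)
  obtain ⟨X₀, hX₀⟩ := h_ne
  have hX₀_zero : X₀ = 0 := by simpa [hX₀.2] using h_norm hX₀.1
  refine fun R ↦ ⟨c' * c, by positivity, fun X hX _ ↦ ⟨X₀, hX₀, ?_⟩⟩
  rw [hX₀_zero, sub_zero, Real.rpow_one]
  exact h_norm hX

theorem norm_congruence_le (U : Matrix ι κ ℝ) (M : Matrix κ κ ℝ) :
    ‖congruence U M‖ ≤ ‖U‖ ^ 2 * ‖M‖ :=
  calc ‖U * M * Uᴴ‖ ≤ ‖U‖ * ‖M‖ * ‖Uᴴ‖ :=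
        (frobenius_norm_mul _ _).trans (by gcongr; exact frobenius_norm_mul _ _)
    _ = ‖U‖ ^ 2 * ‖M‖ := by rw [frobenius_norm_conjTranspose]; ring

theorem exists_norm_sub_congruence_le [DecidableEq ι] {S G : Matrix ι ι ℝ} (hS : S.PosSemidef)
    {U : Matrix ι κ ℝ} (hUG : 1 - U * Uᴴ = G * S) (R : ℝ) :
    ∃ c : ℝ, 0 ≤ c ∧ ∀ X : Matrix ι ι ℝ, X.PosSemidef → ‖X‖ ≤ R →
      ‖X - congruence U (congruence Uᴴ X)‖ ≤ c * √(S * X).trace := by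
  refine ⟨(1 + ‖U * Uᴴ‖) * (‖G‖ * √(S.trace * (‖(1 : Matrix ι ι ℝ)‖ * R))), by positivity,
    fun X hX hXR ↦ ?_⟩
  have h_trace : X.trace ≤ ‖(1 : Matrix ι ι ℝ)‖ * R := by
    have h := (le_abs_self _).trans (abs_trace_mul_le_norm_mul_norm 1 X)
    rw [Matrix.one_mul] at h
    exact h.trans (by gcongr)
  have h_SX : ‖S * X‖ ≤ √(S.trace * (‖(1 : Matrix ι ι ℝ)‖ * R)) * √(S * X).trace := by
    have := hS.trace_nonneg
    have := trace_mul_nonneg hS hX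
    rw [← Real.sqrt_mul (mul_nonneg hS.trace_nonneg (hX.trace_nonneg.trans h_trace))]
    exact Real.le_sqrt_of_sq_le ((norm_mul_sq_le_trace hS hX).trans (by gcongr))
  have h_split : X - congruence U (congruence Uᴴ X) =
      G * (S * X) + U * Uᴴ * (G * (S * X))ᴴ := by
    rw [← Matrix.mul_assoc, ← hUG, conjTranspose_mul, hX.isHermitian.eq, congruence_apply,
      congruence_apply, conjTranspose_conjTranspose, conjTranspose_sub, conjTranspose_mul,
      conjTranspose_conjTranspose, conjTranspose_one]
    simp only [Matrix.sub_mul, Matrix.mul_sub, Matrix.one_mul, Matrix.mul_one, Matrix.mul_assoc]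
    abel
  have h_GSX : ‖G * (S * X)‖ ≤ ‖G‖ * ‖S * X‖ := frobenius_norm_mul _ _
  calc ‖X - congruence U (congruence Uᴴ X)‖
      ≤ ‖G * (S * X)‖ + ‖U * Uᴴ‖ * ‖(G * (S * X))ᴴ‖ := by
        rw [h_split]
        exact (norm_add_le _ _).trans (by gcongr; exact frobenius_norm_mul _ _)
    _ = (1 + ‖U * Uᴴ‖) * ‖G * (S * X)‖ := by rw [frobenius_norm_conjTranspose]; ring
    _ ≤ (1 + ‖U * Uᴴ‖) *
        (‖G‖ * (√(S.trace * (‖(1 : Matrix ι ι ℝ)‖ * R)) * √(S * X).trace)) := by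
        gcongr; exact h_GSX.trans (by gcongr)
    _ = _ := by ring

theorem exists_norm_sub_congruence_le_sqrt [DecidableEq ι] {S G : Matrix ι ι ℝ}
    (hS : S.PosSemidef) {U : Matrix ι κ ℝ} (hUG : 1 - U * Uᴴ = G * S) {c : ℝ} (hc : 0 ≤ c)
    (h_trace : ∀ X : Matrix ι ι ℝ, X.PosSemidef → (S * X).trace ≤ c * ‖L X - w‖) (R : ℝ) :
    ∃ a : ℝ, 0 ≤ a ∧ ∀ X : Matrix ι ι ℝ, X.PosSemidef → ‖X‖ ≤ R →
      ‖X - congruence U (congruence Uᴴ X)‖ ≤ a * √‖L X - w‖ ∧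
        ‖L (congruence U (congruence Uᴴ X)) - w‖ ≤ a * √‖L X - w‖ := by
  obtain ⟨c₁, hc₁, h_sub⟩ := exists_norm_sub_congruence_le hS hUG R
  obtain ⟨K, hK, hLK⟩ := exists_forall_norm_map_le L
  obtain ⟨B, hB⟩ := exists_forall_norm_map_sub_le L w R
  refine ⟨max (c₁ * √c) (√B + K * (c₁ * √c)), by positivity, fun X hX hXR ↦ ?_⟩
  have h_dist : ‖X - congruence U (congruence Uᴴ X)‖ ≤ c₁ * √c * √‖L X - w‖ := by
    rw [mul_assoc, ← Real.sqrt_mul hc]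
    exact (h_sub X hX hXR).trans (by gcongr; exact h_trace X hX)
  refine ⟨h_dist.trans (by gcongr; exact le_max_left _ _), ?_⟩
  calc ‖L (congruence U (congruence Uᴴ X)) - w‖
      = ‖(L X - w) - L (X - congruence U (congruence Uᴴ X))‖ := by
        rw [map_sub]; congr 1; abel
    _ ≤ √‖L X - w‖ * √‖L X - w‖ + K * ‖X - congruence U (congruence Uᴴ X)‖ := by
        rw [Real.mul_self_sqrt (norm_nonneg _)]
        exact (norm_sub_le _ _).trans (by gcongr; exact hLK _)
    _ ≤ √B * √‖L X - w‖ + K * (c₁ * √c * √‖L X - w‖) := by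
        gcongr
        exact hB X hXR
    _ = (√B + K * (c₁ * √c)) * √‖L X - w‖ := by ring
    _ ≤ _ := by gcongr; exact le_max_right _ _

theorem HasHolderErrorBound.of_congruence [DecidableEq ι] {S G : Matrix ι ι ℝ}
    (hS : S.PosSemidef) {U : Matrix ι κ ℝ} (hUG : 1 - U * Uᴴ = G * S) {c : ℝ} (hc : 0 ≤ c)
    (h_trace : ∀ X : Matrix ι ι ℝ, X.PosSemidef → (S * X).trace ≤ c * ‖L X - w‖)
    (hγ₀ : 0 ≤ γ) (hγ₁ : γ ≤ 1) (h : HasHolderErrorBound (L ∘ₗ congruence U) w γ) :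
    HasHolderErrorBound L w (γ / 2) := by
  intro R
  obtain ⟨a, ha, h_face⟩ := exists_norm_sub_congruence_le_sqrt hS hUG hc h_trace R
  obtain ⟨B, hB⟩ := exists_forall_norm_map_sub_le L w R
  obtain ⟨k, hk, h⟩ := h (‖Uᴴ‖ ^ 2 * R)
  refine ⟨a * √B ^ (1 - γ) + ‖U‖ ^ 2 * (k * a ^ γ), by positivity, fun X hX hXR ↦ ?_⟩
  obtain ⟨h_dist, h_res⟩ := h_face X hX hXR
  obtain ⟨Y, ⟨hY, hLY⟩, hXY⟩ := h (congruence Uᴴ X) (posSemidef_congruence hX Uᴴ)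
    ((norm_congruence_le Uᴴ X).trans (by gcongr))
  refine ⟨congruence U Y, ⟨posSemidef_congruence hY U, hLY⟩, ?_⟩
  have h_pow : ‖L X - w‖ ^ (γ / 2) = √‖L X - w‖ ^ γ := by
    rw [Real.sqrt_eq_rpow, ← Real.rpow_mul (norm_nonneg _)]; ring_nf
  have h_linear : √‖L X - w‖ ≤ √B ^ (1 - γ) * √‖L X - w‖ ^ γ := by
    simpa using rpow_le_rpow_sub_mul_rpow (Real.sqrt_nonneg _)
      (Real.sqrt_le_sqrt (hB X hXR)) hγ₀ hγ₁
  calc ‖X - congruence U Y‖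
      ≤ ‖X - congruence U (congruence Uᴴ X)‖ + ‖congruence U (congruence Uᴴ X - Y)‖ := by
        rw [map_sub]; exact norm_sub_le_norm_sub_add_norm_sub _ _ _
    _ ≤ a * √‖L X - w‖ + ‖U‖ ^ 2 * (k * (a * √‖L X - w‖) ^ γ) := by
        gcongr
        refine (norm_congruence_le U _).trans ?_
        gcongr
        exact hXY.trans (by gcongr; exact h_res)
    _ ≤ a * (√B ^ (1 - γ) * √‖L X - w‖ ^ γ) +
        ‖U‖ ^ 2 * (k * (a ^ γ * √‖L X - w‖ ^ γ)) := by
        rw [Real.mul_rpow ha (Real.sqrt_nonneg _)]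
        gcongr
    _ = (a * √B ^ (1 - γ) + ‖U‖ ^ 2 * (k * a ^ γ)) * ‖L X - w‖ ^ (γ / 2) := by
        rw [h_pow]; ring

theorem nonempty_spectrahedron_comp_congruence [DecidableEq ι] {S G : Matrix ι ι ℝ}
    (hS : S.PosSemidef) {U : Matrix ι κ ℝ} (hUG : 1 - U * Uᴴ = G * S) {X : Matrix ι ι ℝ}
    (hX : X ∈ spectrahedron L w) (hSX : (S * X).trace = 0) :
    (spectrahedron (L ∘ₗ congruence U) w).Nonempty := by
  obtain ⟨c, -, h⟩ := exists_norm_sub_congruence_le hS hUG ‖X‖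
  have h_eq : X = congruence U (congruence Uᴴ X) := by
    simpa [hSX, sub_eq_zero] using h X hX.1 le_rfl
  refine ⟨congruence Uᴴ X, posSemidef_congruence hX.1 Uᴴ, ?_⟩
  rw [LinearMap.comp_apply, ← h_eq, hX.2]

end ErrorBound

section Induction

variable {W : Type*} [NormedAddCommGroup W] [NormedSpace ℝ W]

theorem hasHolderErrorBound_of_isEmpty {ι : Type*} [Fintype ι] [IsEmpty ι]
    {L : Matrix ι ι ℝ →ₗ[ℝ] W} {w : W} (h_ne : (spectrahedron L w).Nonempty) (γ : ℝ) :
    HasHolderErrorBound L w γ := by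
  obtain ⟨X₀, hX₀⟩ := h_ne
  refine fun _ ↦ ⟨0, le_rfl, fun X _ _ ↦ ⟨X₀, hX₀, ?_⟩⟩
  rw [Subsingleton.elim X X₀, sub_self, norm_zero, zero_mul]

theorem posDef_of_isEmpty_subtype_eigenvalues_eq_zero {ι : Type*} [Fintype ι] [DecidableEq ι]
    {S : Matrix ι ι ℝ} (hS : S.PosSemidef)
    (h : IsEmpty {i // hS.isHermitian.eigenvalues i = 0}) : S.PosDef :=
  hS.isHermitian.posDef_iff_eigenvalues_pos.2 fun i ↦
    (hS.eigenvalues_nonneg i).lt_of_ne' fun hi ↦ h.false ⟨i, hi⟩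

theorem card_subtype_eigenvalues_eq_zero_lt {ι : Type*} [Fintype ι] [DecidableEq ι]
    {S : Matrix ι ι ℝ} (hS : S.IsHermitian) (h_ne : S ≠ 0) :
    Fintype.card {i // hS.eigenvalues i = 0} < Fintype.card ι := by
  obtain ⟨i, hi⟩ := Function.ne_iff.1 (mt hS.eigenvalues_eq_zero_iff.1 h_ne)
  exact Fintype.card_subtype_lt hi

theorem hasHolderErrorBound_two_rpow {ι : Type*} [Fintype ι] {L : Matrix ι ι ℝ →ₗ[ℝ] W} {w : W}
    (h_ne : (spectrahedron L w).Nonempty) :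
    HasHolderErrorBound L w (2 ^ (1 - Fintype.card ι : ℝ)) := by
  classical
  induction hk : Fintype.card ι using Nat.strong_induction_on generalizing ι with | _ k ih
  subst hk
  cases isEmpty_or_nonempty ι with
  | inl _ => exact hasHolderErrorBound_of_isEmpty h_ne _
  | inr _ =>
  have h_one {ι : Type _} [Fintype ι] [Nonempty ι] : (2 : ℝ) ^ (1 - Fintype.card ι : ℝ) ≤ 1 :=
    Real.rpow_le_one_of_one_le_of_nonpos one_le_two
      (sub_nonpos.2 (by exact_mod_cast Fintype.card_pos))
  by_cases h_slater : ∃ M ∈ spectrahedron L w, M.PosDef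
  · obtain ⟨M, hM, hM_pos⟩ := h_slater
    exact (hasHolderErrorBound_one_of_posDef hM hM_pos).mono (by positivity) h_one
  push Not at h_slater
  obtain ⟨S, hS, hS_ne, c, hc, h_trace⟩ := exists_posSemidef_trace_mul_le h_ne h_slater
  cases isEmpty_or_nonempty {i // hS.isHermitian.eigenvalues i = 0} with
  | inl h_empty =>
    have hS_pos := posDef_of_isEmpty_subtype_eigenvalues_eq_zero hS h_empty
    exact (hasHolderErrorBound_one_of_trace_mul_le hS_pos h_ne hc h_trace).mono
      (by positivity) h_one
  | inr _ =>
    obtain ⟨U, G, hUG⟩ := exists_one_sub_mul_conjTranspose_eq_mul hS.isHermitian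
    have h_card := card_subtype_eigenvalues_eq_zero_lt hS.isHermitian hS_ne
    obtain ⟨X₀, hX₀⟩ := h_ne
    have hSX₀ : (S * X₀).trace = 0 :=
      le_antisymm (by simpa [hX₀.2] using h_trace X₀ hX₀.1) (trace_mul_nonneg hS hX₀.1)
    have h_face := ih _ h_card (nonempty_spectrahedron_comp_congruence hS hUG hX₀ hSX₀) rfl
    refine (h_face.of_congruence hS hUG hc h_trace (by positivity) h_one).mono (by positivity) ?_
    rw [← Real.rpow_sub_one two_ne_zero]
    refine Real.rpow_le_rpow_of_exponent_le one_le_two ?_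
    have : (Fintype.card {i // hS.isHermitian.eigenvalues i = 0} : ℝ) + 1 ≤ Fintype.card ι := by
      exact_mod_cast h_card
    linarith

end Induction

section Minimizers

variable {ι W : Type*} [Fintype ι] [NormedAddCommGroup W] [NormedSpace ℝ W]

theorem isClosed_setOf_posSemidef {ι : Type*} [Finite ι] :
    IsClosed {X : Matrix ι ι ℝ | X.PosSemidef} := by
  have := Fintype.ofFinite ι
  simp only [posSemidef_iff_dotProduct_mulVec, IsHermitian, ofPred_and, ofPred_forall]
  exact (isClosed_eq (by fun_prop) (by fun_prop)).inter <|
    isClosed_iInter fun x ↦ isClosed_le (by fun_prop) (by fun_prop)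

/-- The optimal set of the semidefinite program `min tr (D X)` subject to `X ⪰ 0, L X = w`. -/
def traceMinimizers (D : Matrix ι ι ℝ) (L : Matrix ι ι ℝ →ₗ[ℝ] W) (w : W) :
    Set (Matrix ι ι ℝ) :=
  {X ∈ spectrahedron L w | IsMinOn (traceMul D) (spectrahedron L w) X}

variable {D : Matrix ι ι ℝ} {L : Matrix ι ι ℝ →ₗ[ℝ] W} {w : W}

theorem nonempty_traceMinimizers (hD : D.PosDef) (h_ne : (spectrahedron L w).Nonempty) :
    (traceMinimizers D L w).Nonempty := by
  have : ProperSpace (Matrix ι ι ℝ) := FiniteDimensional.proper ℝ _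
  obtain ⟨X₁, hX₁⟩ := h_ne
  obtain ⟨c, hc, h_coercive⟩ := exists_norm_le_mul_trace hD
  have h_closed : IsClosed (spectrahedron L w) :=
    isClosed_setOf_posSemidef.inter
      (isClosed_eq (LinearMap.continuous_of_finiteDimensional L) continuous_const)
  have h_cont := LinearMap.continuous_of_finiteDimensional (traceMul D)
  refine h_cont.continuousOn.exists_isMinOn' h_closed hX₁ ?_
  refine Filter.eventually_inf_principal.2 ?_
  filter_upwards [(isCompact_closedBall (0 : Matrix ι ι ℝ) (c * traceMul D X₁)).compl_mem_cocompact]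
    with X hX_far hX
  by_contra! h_lt
  refine hX_far (mem_closedBall_zero_iff.2 ((h_coercive X hX.1).trans ?_))
  gcongr
  exact h_lt.le

theorem spectrahedron_prod_traceMul_eq_traceMinimizers {X₀ : Matrix ι ι ℝ}
    (hX₀ : X₀ ∈ traceMinimizers D L w) :
    spectrahedron (L.prod (traceMul D)) (w, traceMul D X₀) = traceMinimizers D L w := by
  ext X
  constructor
  · rintro ⟨hX, h_eq⟩
    obtain ⟨hLX, hDX⟩ := Prod.ext_iff.1 h_eq
    exact ⟨⟨hX, hLX⟩, fun X' hX' ↦ hDX.le.trans (hX₀.2 hX')⟩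
  · rintro ⟨hX, h_min⟩
    exact ⟨hX.1, Prod.ext hX.2 ((h_min hX₀.1).antisymm (hX₀.2 hX))⟩

theorem exists_forall_mem_traceMinimizers_norm_sub_le (hD : D.PosDef)
    (h_ne : (spectrahedron L w).Nonempty) :
    ∃ c : ℝ, 0 ≤ c ∧ ∀ X ∈ spectrahedron L w, ∀ e ≤ 1,
      (∀ X' ∈ spectrahedron L w, traceMul D X ≤ traceMul D X' + e) →
        ∃ Y ∈ traceMinimizers D L w, ‖X - Y‖ ≤ c * e ^ (2 ^ (1 - Fintype.card ι : ℝ) : ℝ) := by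
  obtain ⟨X₀, hX₀⟩ := nonempty_traceMinimizers hD h_ne
  obtain ⟨k, hk, h_coercive⟩ := exists_norm_le_mul_trace hD
  have h_eq := spectrahedron_prod_traceMul_eq_traceMinimizers hX₀
  obtain ⟨c, hc, h⟩ := hasHolderErrorBound_two_rpow ⟨X₀, h_eq.ge hX₀⟩ (k * (traceMul D X₀ + 1))
  refine ⟨c, hc, fun X hX e he h_gap ↦ ?_⟩
  have h_lower : traceMul D X₀ ≤ traceMul D X := hX₀.2 hX
  have h_upper := h_gap X₀ hX₀.1
  obtain ⟨Y, hY, hXY⟩ := h X hX.1 <| (h_coercive X hX.1).trans <| by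
    gcongr
    exact h_upper.trans (by gcongr)
  refine ⟨Y, h_eq.le hY, hXY.trans ?_⟩
  gcongr
  rw [LinearMap.prod_apply, Function.prod_apply, hX.2, Prod.mk_sub_mk, sub_self, Prod.norm_mk,
    norm_zero, Real.norm_of_nonneg (by linarith), max_eq_right (by linarith)]
  linarith

end Minimizers

section SemidefiniteProgram

variable {n m : ℕ} {C Cbar : Matrix (Fin n) (Fin n) ℝ} {A : Fin m → Matrix (Fin n) (Fin n) ℝ}
  {b : Fin m → ℝ} {ε : ℝ}

theorem frobNorm_eq_norm {ι κ : Type*} [Fintype ι] [Fintype κ] (M : Matrix ι κ ℝ) :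
    frobNorm M = ‖M‖ := by
  simp [frobNorm, frobenius_norm_def, Real.sqrt_eq_rpow]

theorem sInf_image_frobNorm_sub_le {ι κ : Type*} [Fintype ι] [Fintype κ]
    {P : Set (Matrix ι κ ℝ)} {M X : Matrix ι κ ℝ} (hX : X ∈ P) :
    sInf ((fun X ↦ frobNorm (M - X)) '' P) ≤ ‖M - X‖ := by
  refine csInf_le ⟨0, ?_⟩ ⟨X, hX, frobNorm_eq_norm _⟩
  rintro _ ⟨Y, -, rfl⟩
  exact Real.sqrt_nonneg _

theorem primalFeasible_iff_mem_spectrahedron {X : Matrix (Fin n) (Fin n) ℝ} :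
    PrimalFeasible A b X ↔ X ∈ spectrahedron (LinearMap.pi fun i ↦ traceMul (A i)) b :=
  ⟨fun h ↦ ⟨h.2.2, funext h.2.1⟩,
    fun h ↦ ⟨isHermitian_iff_isSymm.1 h.1.isHermitian, congrFun h.2, h.1⟩⟩

theorem exists_dualFeasible_iff_mem_spectrahedron {W : Type*} [NormedAddCommGroup W]
    [NormedSpace ℝ W] {P : Matrix (Fin n) (Fin n) ℝ →ₗ[ℝ] W}
    (hP : LinearMap.ker P = Submodule.span ℝ (range A)) {S : Matrix (Fin n) (Fin n) ℝ} :
    (∃ y, DualFeasible C Cbar A ε y S) ↔ S ∈ spectrahedron P (P (C + ε • Cbar)) := by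
  have h_lin : P S = P (C + ε • Cbar) ↔ ∃ y : Fin m → ℝ, ∑ i, y i • A i + S = C + ε • Cbar := by
    rw [eq_comm, ← sub_eq_zero, ← map_sub, ← LinearMap.mem_ker, hP,
      Submodule.mem_span_range_iff_exists_fun]
    simp only [eq_sub_iff_add_eq]
  constructor
  · rintro ⟨y, -, hy, hS⟩
    exact ⟨hS, h_lin.2 ⟨y, hy⟩⟩
  · rintro ⟨hS, hPS⟩
    obtain ⟨y, hy⟩ := h_lin.1 hPS
    exact ⟨y, isHermitian_iff_isSymm.1 hS.isHermitian, hy, hS⟩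

theorem trace_objective_mul_eq {X S : Matrix (Fin n) (Fin n) ℝ} {y : Fin m → ℝ}
    (hX : PrimalFeasible A b X) (hS : DualFeasible C Cbar A ε y S) :
    ((C + ε • Cbar) * X).trace = ∑ i, b i * y i + (S * X).trace := by
  rw [← hS.2.1, Matrix.add_mul, trace_add, Finset.sum_mul, trace_sum]
  simp [hX.2.1, mul_comm]

theorem primalOpt_eq_traceMinimizers {y₀ : Fin m → ℝ} {S₀ : Matrix (Fin n) (Fin n) ℝ}
    (hS₀ : DualFeasible C Cbar A ε y₀ S₀) :
    PrimalOpt C Cbar A b ε = traceMinimizers S₀ (LinearMap.pi fun i ↦ traceMul (A i)) b := by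
  ext X
  refine Iff.trans (and_congr_right fun hX ↦ ?_)
    (and_congr_left' primalFeasible_iff_mem_spectrahedron)
  simp only [isMinOn_iff, ← primalFeasible_iff_mem_spectrahedron, traceMul_apply]
  refine forall₂_congr fun X' hX' ↦ ?_
  rw [trace_objective_mul_eq hX hS₀, trace_objective_mul_eq hX' hS₀, add_le_add_iff_left]

theorem setOf_exists_dualOpt_eq_traceMinimizers {W : Type*} [NormedAddCommGroup W]
    [NormedSpace ℝ W] {P : Matrix (Fin n) (Fin n) ℝ →ₗ[ℝ] W}
    (hP : LinearMap.ker P = Submodule.span ℝ (range A)) {X₀ : Matrix (Fin n) (Fin n) ℝ}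
    (hX₀ : PrimalFeasible A b X₀) :
    {S | ∃ y, (y, S) ∈ DualOpt C Cbar A b ε} = traceMinimizers X₀ P (P (C + ε • Cbar)) := by
  have h_obj {y S} (hS : DualFeasible C Cbar A ε y S) :
      traceMul X₀ S = ((C + ε • Cbar) * X₀).trace - ∑ i, b i * y i := by
    rw [trace_objective_mul_eq hX₀ hS, traceMul_apply, trace_mul_comm, add_sub_cancel_left]
  ext S
  constructor
  · rintro ⟨y, hS, h_max⟩
    refine ⟨(exists_dualFeasible_iff_mem_spectrahedron hP).1 ⟨y, hS⟩, fun S' hS' ↦ ?_⟩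
    obtain ⟨y', hS'⟩ := (exists_dualFeasible_iff_mem_spectrahedron hP).2 hS'
    change traceMul X₀ S ≤ traceMul X₀ S'
    rw [h_obj hS, h_obj hS']
    exact sub_le_sub_left (h_max y' S' hS') _
  · rintro ⟨hS, h_min⟩
    obtain ⟨y, hS⟩ := (exists_dualFeasible_iff_mem_spectrahedron hP).2 hS
    refine ⟨y, hS, fun y' S' hS' ↦ ?_⟩
    have h_le : traceMul X₀ S ≤ traceMul X₀ S' :=
      h_min ((exists_dualFeasible_iff_mem_spectrahedron hP).1 ⟨y', hS'⟩)
    rw [h_obj hS, h_obj hS'] at h_le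
    exact (sub_le_sub_iff_left _).1 h_le

theorem exists_forall_mem_primalOpt_norm_sub_le {y₀ : Fin m → ℝ}
    {X₀ S₀ : Matrix (Fin n) (Fin n) ℝ} (hX₀ : PrimalFeasible A b X₀)
    (hS₀ : DualFeasible C Cbar A ε y₀ S₀) (hS₀_pos : S₀.PosDef) :
    ∃ c : ℝ, 0 ≤ c ∧ ∀ X y S, PrimalFeasible A b X → DualFeasible C Cbar A ε y S →
      (S * X).trace ≤ 1 → ∃ Y ∈ PrimalOpt C Cbar A b ε,
        ‖X - Y‖ ≤ c * (S * X).trace ^ (2 ^ (1 - n : ℝ) : ℝ) := by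
  obtain ⟨c, hc, h⟩ := exists_forall_mem_traceMinimizers_norm_sub_le hS₀_pos
    ⟨X₀, primalFeasible_iff_mem_spectrahedron.1 hX₀⟩
  refine ⟨c, hc, fun X y S hX hS h_gap ↦ ?_⟩
  rw [primalOpt_eq_traceMinimizers hS₀]
  simpa only [Fintype.card_fin] using
    h X (primalFeasible_iff_mem_spectrahedron.1 hX) _ h_gap fun X' hX' ↦ by
      have hX' := primalFeasible_iff_mem_spectrahedron.2 hX'
      simp only [traceMul_apply]
      linarith [trace_objective_mul_eq hX hS, trace_objective_mul_eq hX hS₀,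
        trace_objective_mul_eq hX' hS, trace_objective_mul_eq hX' hS₀,
        trace_mul_nonneg hS.2.2 hX'.2.2]

theorem exists_forall_mem_dualOpt_norm_sub_le {y₀ : Fin m → ℝ}
    {X₀ S₀ : Matrix (Fin n) (Fin n) ℝ} (hX₀ : PrimalFeasible A b X₀) (hX₀_pos : X₀.PosDef)
    (hS₀ : DualFeasible C Cbar A ε y₀ S₀) :
    ∃ c : ℝ, 0 ≤ c ∧ ∀ X y S, PrimalFeasible A b X → DualFeasible C Cbar A ε y S →
      (S * X).trace ≤ 1 → ∃ T ∈ {T | ∃ z, (z, T) ∈ DualOpt C Cbar A b ε},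
        ‖S - T‖ ≤ c * (S * X).trace ^ (2 ^ (1 - n : ℝ) : ℝ) := by
  obtain ⟨Q, hQ⟩ := (Submodule.span ℝ (range A)).exists_isCompl
  have hP := Submodule.ker_projection hQ.symm
  obtain ⟨c, hc, h⟩ := exists_forall_mem_traceMinimizers_norm_sub_le hX₀_pos
    ⟨S₀, (exists_dualFeasible_iff_mem_spectrahedron hP).1 ⟨y₀, hS₀⟩⟩
  refine ⟨c, hc, fun X y S hX hS h_gap ↦ ?_⟩
  rw [setOf_exists_dualOpt_eq_traceMinimizers hP hX₀]
  simpa only [Fintype.card_fin] using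
    h S ((exists_dualFeasible_iff_mem_spectrahedron hP).1 ⟨y, hS⟩) _ h_gap fun S' hS' ↦ by
      obtain ⟨y', hS'⟩ := (exists_dualFeasible_iff_mem_spectrahedron hP).2 hS'
      rw [traceMul_apply, traceMul_apply, trace_mul_comm X₀, trace_mul_comm X₀]
      linarith [trace_objective_mul_eq hX hS, trace_objective_mul_eq hX₀ hS,
        trace_objective_mul_eq hX hS', trace_objective_mul_eq hX₀ hS',
        trace_mul_nonneg hS'.2.2 hX.2.2]

theorem trace_mul_eq_of_centralSol {μ : ℝ} {X S : Matrix (Fin n) (Fin n) ℝ} {y : Fin m → ℝ}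
    (h : CentralSol C Cbar A b ε μ X y S) : (S * X).trace = n * μ := by
  rw [trace_mul_comm, h.2.2, trace_smul, trace_one, Fintype.card_fin, smul_eq_mul, mul_comm]

end SemidefiniteProgram

theorem stmt14_general {n m : ℕ} {C Cbar : Matrix (Fin n) (Fin n) ℝ}
    {A : Fin m → Matrix (Fin n) (Fin n) ℝ} {b : Fin m → ℝ} {ε : ℝ}
    (h_interior : ∃ X y S, PrimalFeasible A b X ∧ X.PosDef ∧
      DualFeasible C Cbar A ε y S ∧ S.PosDef) :
    ∃ c μhat : ℝ, 0 < c ∧ 0 < μhat ∧ ∀ μ : ℝ, 0 < μ → μ ≤ μhat →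
      ∀ (Xμ Sμ : Matrix (Fin n) (Fin n) ℝ) (yμ : Fin m → ℝ),
        CentralSol C Cbar A b ε μ Xμ yμ Sμ →
        sInf ((fun X => frobNorm (Xμ - X)) '' PrimalOpt C Cbar A b ε) ≤
            c * ((n : ℝ) * μ) ^ ((2 : ℝ) ^ ((1 : ℝ) - (n : ℝ))) ∧
          sInf ((fun S => frobNorm (Sμ - S)) ''
              {S | ∃ y : Fin m → ℝ, (y, S) ∈ DualOpt C Cbar A b ε}) ≤
            c * ((n : ℝ) * μ) ^ ((2 : ℝ) ^ ((1 : ℝ) - (n : ℝ))) := by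
  obtain ⟨X₀, y₀, S₀, hX₀, hX₀_pos, hS₀, hS₀_pos⟩ := h_interior
  obtain ⟨c₁, hc₁, h_primal⟩ := exists_forall_mem_primalOpt_norm_sub_le hX₀ hS₀ hS₀_pos
  obtain ⟨c₂, hc₂, h_dual⟩ := exists_forall_mem_dualOpt_norm_sub_le hX₀ hX₀_pos hS₀
  refine ⟨c₁ + c₂ + 1, (n + 1 : ℝ)⁻¹, by positivity, by positivity,
    fun μ hμ hμ_le Xμ Sμ yμ h_central ↦ ?_⟩
  have h_gap := trace_mul_eq_of_centralSol h_central
  have h_gap_le : (n : ℝ) * μ ≤ 1 := by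
    have : (n + 1 : ℝ) * μ ≤ 1 := (le_inv_mul_iff₀ (by positivity)).1 (by simpa using hμ_le)
    linarith
  obtain ⟨X, hX, hX_dist⟩ := h_primal Xμ yμ Sμ h_central.1 h_central.2.1 (h_gap ▸ h_gap_le)
  obtain ⟨S, hS, hS_dist⟩ := h_dual Xμ yμ Sμ h_central.1 h_central.2.1 (h_gap ▸ h_gap_le)
  rw [h_gap] at hX_dist hS_dist
  exact ⟨(sInf_image_frobNorm_sub_le hX).trans (hX_dist.trans (by gcongr; linarith)),
    (sInf_image_frobNorm_sub_le hS).trans (hS_dist.trans (by gcongr; linarith))⟩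

end HolderBound

/-- a Hölderian error bound for the distance of central solutions to the
optimal sets. -/
theorem stmt14 {n m : ℕ} (C Cbar : Matrix (Fin n) (Fin n) ℝ)
    (A : Fin m → Matrix (Fin n) (Fin n) ℝ) (b : Fin m → ℝ)
    (hSA : StandingAssumptions C Cbar A b) :
    ∃ (c μhat γ : ℝ), 0 < c ∧ 0 < μhat ∧ (2 : ℝ) ^ ((1 : ℝ) - (n : ℝ)) ≤ γ ∧
      ∀ μ : ℝ, 0 < μ → μ ≤ μhat →
        ∀ (Xμ Sμ : Matrix (Fin n) (Fin n) ℝ) (yμ : Fin m → ℝ),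
          CentralSol C Cbar A b 0 μ Xμ yμ Sμ →
          sInf ((fun X => frobNorm (Xμ - X)) '' PrimalOpt C Cbar A b 0) ≤
              c * ((n : ℝ) * μ) ^ γ ∧
            sInf ((fun S => frobNorm (Sμ - S)) ''
                {S | ∃ y : Fin m → ℝ, (y, S) ∈ DualOpt C Cbar A b 0}) ≤
              c * ((n : ℝ) * μ) ^ γ := by
  obtain ⟨c, μhat, hc, hμhat, h⟩ := stmt14_general hSA.2.2.2.2
  exact ⟨c, μhat, _, hc, hμhat, le_rfl, h⟩
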